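/- arXiv:2512.01838 — 2 statements merged into one kernel-verified Lean document; each statement's English description precedes it below -/
import Mathlib

section
/- Moment bound for oscillatory Mellin integrals: Let c ∈ ℝ, k > 0, let g be a Lebesgue probability density on (0,∞) with ‖g‖_{L^∞(x^{2c−1})} = ess sup_{x>0} g(x) x^{2c−1} < ∞, let Y be a random variable with density g, and let h : ℝ → ℂ satisfy 1_{[−k,k]} h ∈ L²(ℝ). Then E[ |∫_{−k}^{k} Y^{c−1+2πit} h(t) dt|² ] ≤ ‖g‖_{L^∞(x^{2c−1})} ∫_{−k}^{k} |h(t)|² dt. -/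
open MeasureTheory Set Filter
open scoped ENNReal

noncomputable section

namespace MultErr

/-- The complex power `x ↦ x^(c-1+2πit)`. -/
def cpw (c t x : ℝ) : ℂ := (x : ℂ) ^ ((c : ℂ) - 1 + 2 * Real.pi * Complex.I * (t : ℂ))

/-- The Mellin transform `M_c[g](t) = ∫₀^∞ x^(c-1+2πit) g(x) dx` of a real-valued `g`. -/
def mellinT (c : ℝ) (g : ℝ → ℝ) (t : ℝ) : ℂ := ∫ x in Ioi (0 : ℝ), cpw c t x * (g x : ℂ)

/-- The multiplicative convolution `(f*g)(y) = ∫₀^∞ f(x) g(y/x) x⁻¹ dx`. -/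
def mconv (f g : ℝ → ℝ) (y : ℝ) : ℝ := ∫ x in Ioi (0 : ℝ), f x * g (y / x) / x

/-- The weighted `L¹`-norm `‖h‖_{L¹(xᵃ)} = ∫₀^∞ |h(x)| xᵃ dx`. -/
def wnorm1 (a : ℝ) (h : ℝ → ℝ) : ℝ := ∫ x in Ioi (0 : ℝ), |h x| * x ^ a

/-- Membership in `L¹((0,∞), xᵃ dx)`. -/
def MemW1 (a : ℝ) (h : ℝ → ℝ) : Prop := IntegrableOn (fun x => |h x| * x ^ a) (Ioi 0)

/-- Membership in `L²((0,∞), xᵃ dx)`. -/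
def MemW2 (a : ℝ) (h : ℝ → ℝ) : Prop := IntegrableOn (fun x => h x ^ 2 * x ^ a) (Ioi 0)

/-- The weighted `L^∞`-norm `ess sup_{x>0} |h(x)| xᵃ`, valued in `ℝ≥0∞`. -/
def wnormInf (a : ℝ) (h : ℝ → ℝ) : ℝ≥0∞ :=
  essSup (fun x => ENNReal.ofReal (|h x| * x ^ a)) (volume.restrict (Ioi 0))

/-- Real-valued weighted `L^∞`-norm. -/
def wnormInfR (a : ℝ) (h : ℝ → ℝ) : ℝ := (wnormInf a h).toReal

/-- A Lebesgue probability density on `(0,∞)`. -/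
def IsDensity (h : ℝ → ℝ) : Prop :=
  (∀ x, 0 ≤ h x) ∧ (∀ x ≤ (0 : ℝ), h x = 0) ∧ IntegrableOn h (Ioi 0) ∧
    (∫ x in Ioi (0 : ℝ), h x) = 1

/-- The class `𝔻`: densities on `(0,∞)` lying in `L¹(x^(c-1)) ∩ L²(x^(2c-1))`. -/
def regD (c : ℝ) (h : ℝ → ℝ) : Prop := IsDensity h ∧ MemW1 (c - 1) h ∧ MemW2 (2 * c - 1) h

/-- A measurable symmetric probability density on `ℝ`. -/
def IsSymmDensity (w : ℝ → ℝ) : Prop :=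
  Measurable w ∧ (∀ t, 0 ≤ w t) ∧ (∀ t, w (-t) = w t) ∧ Integrable w ∧ (∫ t : ℝ, w t) = 1

/-- `ess sup_t 1_{[-k,k]}(t) w(t)/|M_c[φ](t)|`, valued in `ℝ≥0∞`. -/
def winf (c k : ℝ) (w φ : ℝ → ℝ) : ℝ≥0∞ :=
  essSup (fun t => ENNReal.ofReal ((Icc (-k) k).indicator
    (fun t => w t / ‖mellinT c φ t‖) t)) volume

/-- `L_γ = 1 - log γ`. -/
def Lq (γ : ℝ) : ℝ := 1 - Real.log γ

/-- `Δ₄(k) = ∫_{-k}^k w⁴(t)/|M_c[φ](t)|⁴ dt`. -/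
def Δ4 (c k : ℝ) (w φ : ℝ → ℝ) : ℝ :=
  ∫ t in Icc (-k) k, w t ^ 4 / ‖mellinT c φ t‖ ^ 4

/-- `Δ∞(k) = ‖1_{[-k,k]} w/M_c[φ]‖_∞⁴`. -/
def Δinf (c k : ℝ) (w φ : ℝ → ℝ) : ℝ := (winf c k w φ).toReal ^ 4

/-- `c_φ = (‖φ‖_{L^∞(x^{2c-1})}/‖φ‖_{L¹(x^{2(c-1)})}) ∨ 1`. -/
def cphi (c : ℝ) (φ : ℝ → ℝ) : ℝ := max (wnormInfR (2 * c - 1) φ / wnorm1 (2 * (c - 1)) φ) 1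

/-- `V_{h|φ} = ‖h*φ‖_{L¹(x^{2(c-1)})} ∨ 1`. -/
def Vc (c : ℝ) (h φ : ℝ → ℝ) : ℝ := max (wnorm1 (2 * (c - 1)) (mconv h φ)) 1

/-- `V⁽²⁾_{h|φ} = ‖h*φ‖_{L¹(x^{4(c-1)})} ∨ 1`. -/
def V2c (c : ℝ) (h φ : ℝ → ℝ) : ℝ := max (wnorm1 (4 * (c - 1)) (mconv h φ)) 1

/-- `V_{h|φ}(p) = ‖h*φ‖_{L¹(x^{2p(c-1)})} ∨ 1`. -/
def Vpc (c p : ℝ) (h φ : ℝ → ℝ) : ℝ := max (wnorm1 (2 * p * (c - 1)) (mconv h φ)) 1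

/-- `q_k²(h) = ∫_{-k}^k |M_c[h](t)|² w²(t) dt`. -/
def qk2 (c k : ℝ) (w h : ℝ → ℝ) : ℝ :=
  ∫ t in Icc (-k) k, ‖mellinT c h t‖ ^ 2 * w t ^ 2

/-- `q²(h) = ∫_ℝ |M_c[h](t)|² w²(t) dt`. -/
def q2 (c : ℝ) (w h : ℝ → ℝ) : ℝ :=
  ∫ t : ℝ, ‖mellinT c h t‖ ^ 2 * w t ^ 2

/-- The weight `w²(t)/|M_c[φ](t)|²`. -/
def wgt (c : ℝ) (w φ : ℝ → ℝ) (t : ℝ) : ℝ := w t ^ 2 / ‖mellinT c φ t‖ ^ 2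

variable {Ω : Type*} [MeasurableSpace Ω]

/-- The U-part `T̂_k` of the test statistic. -/
def That (c k : ℝ) (w φ : ℝ → ℝ) {n : ℕ} (Y : Fin n → Ω → ℝ) (ω : Ω) : ℂ :=
  ((n : ℂ) * ((n : ℂ) - 1))⁻¹ *
    ∑ j : Fin n, ∑ l : Fin n,
      if j ≠ l then
        ∫ t in Icc (-k) k, cpw c t (Y j ω) * cpw c (-t) (Y l ω) * (wgt c w φ t : ℂ)
      else 0

/-- The linear part `Ŝ_k` of the test statistic. -/
def Shat (c k : ℝ) (w φ f₀ : ℝ → ℝ) {n : ℕ} (Y : Fin n → Ω → ℝ) (ω : Ω) : ℂ :=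
  (n : ℂ)⁻¹ * ∑ j : Fin n,
    ∫ t in Icc (-k) k,
      cpw c t (Y j ω) * (starRingEnd ℂ) (mellinT c (mconv f₀ φ) t) * (wgt c w φ t : ℂ)

/-- The test statistic `q̂_k² = T̂_k - 2Ŝ_k + q_k²(f₀)`. -/
def qhat (c k : ℝ) (w φ f₀ : ℝ → ℝ) {n : ℕ} (Y : Fin n → Ω → ℝ) (ω : Ω) : ℝ :=
  (That c k w φ Y ω - 2 * Shat c k w φ f₀ Y ω).re + qk2 c k w f₀

/-- The critical value `τ_k(α)`. -/
def τcrit (c k α : ℝ) (w φ f₀ : ℝ → ℝ) (n : ℕ) : ℝ :=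
  (18 * cphi c φ * V2c c f₀ φ
      + 69493 * (Real.sqrt (2 * k) / (n : ℝ)) * (Lq (α / 2) / α)) *
    Real.sqrt (Lq (α / 2)) * Real.sqrt (Δ4 c k w φ) / (n : ℝ)
  + 52 * Vc c f₀ φ * cphi c φ * Lq (α / 2) * Real.sqrt (Δinf c k w φ) / (n : ℝ)

/-- `Y₁,…,Y_n` are i.i.d. with Lebesgue density `g`. -/
def IID (P : Measure Ω) {n : ℕ} (Y : Fin n → Ω → ℝ) (g : ℝ → ℝ) : Prop :=
  ProbabilityTheory.iIndepFun (m := fun _ : Fin n => (inferInstance : MeasurableSpace ℝ)) Y P ∧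
  ∀ j, Measurable (Y j) ∧
    Measure.map (Y j) P = (volume : Measure ℝ).withDensity (fun y => ENNReal.ofReal (g y))


/-- Regularity-function assumptions: `s ≥ 1` symmetric non-decreasing with `s(t) → ∞`,
and `w/s` symmetric non-increasing with `w(t)/s(t) → 0` as `|t| → ∞`. -/
def RegFun (w s : ℝ → ℝ) : Prop :=
  (∀ t, 1 ≤ s t) ∧ (∀ t, s (-t) = s t) ∧ MonotoneOn s (Ici 0) ∧
    Tendsto s atTop atTop ∧
    (∀ t, w (-t) / s (-t) = w t / s t) ∧ AntitoneOn (fun t => w t / s t) (Ici 0) ∧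
    Tendsto (fun t => w t / s t) atTop (nhds 0)

/-- Membership in the regularity class `E_s^R`. -/
def inEs (c R : ℝ) (s h : ℝ → ℝ) : Prop :=
  MemW1 (c - 1) h ∧ MemW2 (2 * c - 1) h ∧
    (∫ t : ℝ, s t ^ 2 * ‖mellinT c h t‖ ^ 2) ≤ R ^ 2

/-- Membership in the class `D_v` of densities with uniformly bounded moment constant. -/
def inDv (c v : ℝ) (φ h : ℝ → ℝ) : Prop :=
  regD c h ∧ MemW1 (4 * (c - 1)) h ∧ V2c c h φ ≤ v

/-- `ρ_{k,s}² = (w²(k)/s²(k)) ∨ (1/n)(√Δ₄(k) ∨ √Δ∞(k))`. -/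
def ρks2 (c : ℝ) (w φ s : ℝ → ℝ) (k : ℝ) (n : ℕ) : ℝ :=
  max (w k ^ 2 / s k ^ 2)
    ((1 / (n : ℝ)) * max (Real.sqrt (Δ4 c k w φ)) (Real.sqrt (Δinf c k w φ)))

/-- `η_k² = 1 ∨ √(2k)/(dn)`. -/
def ηk2 (k d : ℝ) (n : ℕ) : ℝ := max 1 (Real.sqrt (2 * k) / (d * (n : ℝ)))

/-- The Bonferroni-corrected critical value `τ_{k|α}` for a collection of cardinality `m`. -/
def τbon (c k α : ℝ) (m : ℕ) (p : ℝ) (w φ f₀ : ℝ → ℝ) (n : ℕ) : ℝ :=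
  (18 * cphi c φ * Vpc c p f₀ φ
      + 69493 * (Real.sqrt (2 * k) * (m : ℝ) ^ ((1 : ℝ) / (p - 1)) / (n : ℝ))
          * (Lq (α / (2 * (m : ℝ))) ^ 2 / α)) *
    Real.sqrt (Lq (α / (2 * (m : ℝ)))) * Real.sqrt (Δ4 c k w φ) / (n : ℝ)
  + 52 * Vc c f₀ φ * cphi c φ * Lq (α / (2 * (m : ℝ))) * Real.sqrt (Δinf c k w φ) / (n : ℝ)

/-- The adaptive factor `δ_𝒦 = (1 + log |𝒦|)^{-1/2}`. -/
def δK (m : ℕ) : ℝ := (1 + Real.log (m : ℝ)) ^ (-(1 : ℝ) / 2)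

/-- `r_{k,s}² = (w²(k)/s²(k)) ∨ (1/n)(δ_𝒦⁻¹ √Δ₄(k) ∨ δ_𝒦⁻² √Δ∞(k))`. -/
def rks2 (c : ℝ) (w φ s : ℝ → ℝ) (k : ℝ) (m n : ℕ) : ℝ :=
  max (w k ^ 2 / s k ^ 2)
    ((1 / (n : ℝ)) * max ((δK m)⁻¹ * Real.sqrt (Δ4 c k w φ))
        (((δK m)⁻¹) ^ 2 * Real.sqrt (Δinf c k w φ)))

/-- `η_{𝒦,s}² = 1 ∨ √(2k₀)|𝒦|^{1/(p-1)}/(dn δ_𝒦⁴)`. -/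
def ηKs2 (k₀ : ℝ) (m : ℕ) (p d : ℝ) (n : ℕ) : ℝ :=
  max 1 (Real.sqrt (2 * k₀) * (m : ℝ) ^ ((1 : ℝ) / (p - 1)) / (d * (n : ℝ) * δK m ^ 4))

/-- The truncated complex power `b(y,t) = 1_{[0,δ]}(y^{c-1}) y^{c-1+2πit}`. -/
def bfun (c δ : ℝ) (y t : ℝ) : ℂ := if y ^ (c - 1) ∈ Icc (0 : ℝ) δ then cpw c t y else 0

/-- `E[b(Y,t)]` for `Y` with density `g` on `(0,∞)`. -/
def Ebfun (c δ : ℝ) (g : ℝ → ℝ) (t : ℝ) : ℂ := ∫ y in Ioi (0 : ℝ), bfun c δ y t * (g y : ℂ)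

/-- The bounded kernel `h_k^b`. -/
def hkb (c δ k : ℝ) (w φ g : ℝ → ℝ) (x y : ℝ) : ℂ :=
  ∫ t in Icc (-k) k,
    (bfun c δ y t - Ebfun c δ g t) * (bfun c δ x (-t) - Ebfun c δ g (-t)) * (wgt c w φ t : ℂ)

/-- `ṽ(x,t) = x^{c-1+2πit} - E[Y^{c-1+2πit}]` for `Y` with density `g`. -/
def vtil (c : ℝ) (g : ℝ → ℝ) (x t : ℝ) : ℂ := cpw c t x - mellinT c g t

/-- The full (unbounded) kernel `h_k` of the canonical U-statistic. -/
def hkfull (c k : ℝ) (w φ g : ℝ → ℝ) (x y : ℝ) : ℂ :=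
  ∫ t in Icc (-k) k, vtil c g x t * vtil c g y (-t) * (wgt c w φ t : ℂ)

variable {Ω' : Type*} [MeasurableSpace Ω']

/-- The U-statistic with kernel `h` built from the sample `Y`. -/
def Ustat (h : ℝ → ℝ → ℂ) {n : ℕ} (Y : Fin n → Ω' → ℝ) (ω : Ω') : ℂ :=
  ((n : ℂ) * ((n : ℂ) - 1))⁻¹ *
    ∑ j : Fin n, ∑ l : Fin n, if j ≠ l then h (Y j ω) (Y l ω) else 0

/-- The centred linear statistic `W_k` (with `g = f*φ` and `g₀ = f₀*φ`). -/
def Wstat (c k : ℝ) (w φ g g₀ : ℝ → ℝ) {n : ℕ} (Y : Fin n → Ω' → ℝ) (ω : Ω') : ℂ :=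
  (n : ℂ)⁻¹ * ∑ j : Fin n,
    ∫ t in Icc (-k) k,
      vtil c g (Y j ω) t * (starRingEnd ℂ) (mellinT c g t - mellinT c g₀ t) * (wgt c w φ t : ℂ)

/-- Mellin transform of a complex-valued function. -/
def mellinTC (c : ℝ) (g : ℝ → ℂ) (t : ℝ) : ℂ := ∫ x in Ioi (0 : ℝ), cpw c t x * g x

/-- Multiplicative convolution of complex-valued functions. -/
def mconvC (f g : ℝ → ℂ) (y : ℝ) : ℂ := ∫ x in Ioi (0 : ℝ), f x * g (y / x) / (x : ℂ)

/-- Weighted `L¹`-norm of a complex-valued function. -/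
def wnorm1C (a : ℝ) (h : ℝ → ℂ) : ℝ := ∫ x in Ioi (0 : ℝ), ‖h x‖ * x ^ a

/-- Membership in `L¹((0,∞), xᵃ dx)` for complex-valued functions. -/
def MemW1C (a : ℝ) (h : ℝ → ℂ) : Prop :=
  AEStronglyMeasurable h (volume.restrict (Ioi 0)) ∧
    IntegrableOn (fun x => ‖h x‖ * x ^ a) (Ioi 0)

/-- Weighted `L²`-norm of a complex-valued function. -/
def wnorm2C (a : ℝ) (h : ℝ → ℂ) : ℝ :=
  Real.sqrt (∫ x in Ioi (0 : ℝ), ‖h x‖ ^ 2 * x ^ a)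

/-- Membership in `L²((0,∞), xᵃ dx)` for complex-valued functions. -/
def MemW2C (a : ℝ) (h : ℝ → ℂ) : Prop :=
  AEStronglyMeasurable h (volume.restrict (Ioi 0)) ∧
    IntegrableOn (fun x => ‖h x‖ ^ 2 * x ^ a) (Ioi 0)

/-- Weighted `L^∞`-norm of a complex-valued function, valued in `ℝ≥0∞`. -/
def wnormInfC (a : ℝ) (h : ℝ → ℂ) : ℝ≥0∞ :=
  essSup (fun x => ENNReal.ofReal (‖h x‖ * x ^ a)) (volume.restrict (Ioi 0))

/-! Extend `h` by zero outside the set of integration. For `y > 0` the inner integral is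
`y ^ (c - 1)` times the inverse Fourier transform of `h` at `log y`, so the substitution
`s = log y` and Plancherel's theorem show that `y ↦ ∫ y ^ (c - 1 + 2πit) h(t) dt` has the same norm
in `L²((0,∞), y ^ (1 - 2c) dy)` as `h` in `L²(ℝ)`. The weight `y ^ (1 - 2c)` is dual to the weight
of the norm `‖g‖_{L^∞(x ^ (2c - 1))}`, so Hölder's inequality concludes. -/

section Plancherel

open scoped FourierTransform SchwartzMap ContDiff

variable {V E : Type*} [NormedAddCommGroup V] [InnerProductSpace ℝ V] [FiniteDimensional ℝ V]
  [MeasurableSpace V] [BorelSpace V]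

lemma integral_fourier_smul_eq_of_integrable [NormedAddCommGroup E] [NormedSpace ℂ E]
    [CompleteSpace E] {φ : V → ℂ} {f : V → E} (hφ : Integrable φ) (hf : Integrable f) :
    ∫ x, 𝓕 φ x • f x = ∫ x, φ x • 𝓕 f x := by
  simpa using! VectorFourier.integral_fourierIntegral_smul_eq_flip (L := innerₗ V)
    Real.continuous_fourierChar continuous_inner hφ hf

variable [NormedAddCommGroup E] [InnerProductSpace ℂ E] [CompleteSpace E]

lemma integral_fourier_smul_eq_smul_fourier_Lp (φ : 𝓢(V, ℂ)) (u : Lp (α := V) E 2) :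
    ∫ x, 𝓕 (φ : V → ℂ) x • u x = ∫ x, φ x • (𝓕 u : Lp (α := V) E 2) x := by
  simpa [SchwartzMap.fourier_coe] using
    DFunLike.congr_fun (Lp.fourier_toTemperedDistribution_eq u) φ

lemma fourier_ae_eq_fourier_toLp {f : V → E} (hf₁ : Integrable f) (hf₂ : MemLp f 2) :
    𝓕 f =ᵐ[volume] (𝓕 (hf₂.toLp f) : Lp (α := V) E 2) := by
  have hcont : Continuous (𝓕 f) :=
    VectorFourier.fourierIntegral_continuous Real.continuous_fourierChar continuous_inner hf₁
  refine ae_eq_of_integral_contDiff_smul_eq hcont.locallyIntegrable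
    ((Lp.memLp _).locallyIntegrable one_le_two) fun φ hφ hφc ↦ ?_
  have hψc : HasCompactSupport (Complex.ofRealCLM ∘ φ) := hφc.comp_left rfl
  let ψ : 𝓢(V, ℂ) := hψc.toSchwartzMap (by fun_prop)
  calc ∫ x, φ x • 𝓕 f x
      = ∫ x, 𝓕 (ψ : V → ℂ) x • f x := by
        rw [integral_fourier_smul_eq_of_integrable ψ.integrable hf₁]
        simp [ψ]
    _ = ∫ x, 𝓕 (ψ : V → ℂ) x • (hf₂.toLp f) x :=
        integral_congr_ae (hf₂.coeFn_toLp.mono fun x hx ↦ by simp only [hx])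
    _ = ∫ x, φ x • (𝓕 (hf₂.toLp f) : Lp (α := V) E 2 volume) x := by
        rw [integral_fourier_smul_eq_smul_fourier_Lp]
        simp [ψ]

lemma memLp_two_fourier {f : V → E} (hf₁ : Integrable f) (hf₂ : MemLp f 2) : MemLp (𝓕 f) 2 :=
  (memLp_congr_ae (fourier_ae_eq_fourier_toLp hf₁ hf₂)).2 (Lp.memLp _)

lemma lpNorm_two_fourier {f : V → E} (hf₁ : Integrable f) (hf₂ : MemLp f 2) :
    lpNorm (𝓕 f) 2 volume = lpNorm f 2 volume := by
  rw [← toReal_eLpNorm (memLp_two_fourier hf₁ hf₂).1, ← toReal_eLpNorm hf₂.1,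
    eLpNorm_congr_ae (fourier_ae_eq_fourier_toLp hf₁ hf₂), ← Lp.norm_def, Lp.norm_fourier_eq,
    Lp.norm_toLp]

lemma integral_norm_sq_fourier {f : V → E} (hf₁ : Integrable f) (hf₂ : MemLp f 2) :
    ∫ ξ, ‖𝓕 f ξ‖ ^ 2 = ∫ x, ‖f x‖ ^ 2 := by
  have hsq {u : V → E} (hu : MemLp u 2) : ∫ x, ‖u x‖ ^ 2 = lpNorm u 2 volume ^ 2 := by
    rw [lpNorm_eq_integral_norm_rpow_toReal two_ne_zero ENNReal.ofNat_ne_top hu.1,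
      ← Real.rpow_mul_natCast (by positivity)]
    simp
  rw [hsq (memLp_two_fourier hf₁ hf₂), hsq hf₂, lpNorm_two_fourier hf₁ hf₂]

lemma integrable_norm_sq_fourierInv {f : V → E} (hf₁ : Integrable f) (hf₂ : MemLp f 2) :
    Integrable fun ξ ↦ ‖𝓕⁻ f ξ‖ ^ 2 := by
  simpa only [Real.fourierInv_eq_fourier_neg] using
    (memLp_two_fourier hf₁ hf₂).norm.integrable_sq.comp_neg

lemma integral_norm_sq_fourierInv {f : V → E} (hf₁ : Integrable f) (hf₂ : MemLp f 2) :
    ∫ ξ, ‖𝓕⁻ f ξ‖ ^ 2 = ∫ x, ‖f x‖ ^ 2 := by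
  simp only [Real.fourierInv_eq_fourier_neg]
  rw [integral_neg_eq_self (fun ξ ↦ ‖𝓕 f ξ‖ ^ 2), integral_norm_sq_fourier hf₁ hf₂]

end Plancherel

section LogSubstitution

variable {E : Type*} [NormedAddCommGroup E] [NormedSpace ℝ E]

lemma integrableOn_Ioi_inv_smul_comp_log_iff {G : ℝ → E} :
    IntegrableOn (fun y ↦ y⁻¹ • G (Real.log y)) (Ioi 0) ↔ Integrable G := by
  rw [← Real.range_exp, ← image_univ, integrableOn_image_iff_integrableOn_abs_deriv_smul .univ
    (fun x _ ↦ (Real.hasDerivAt_exp x).hasDerivWithinAt) Real.exp_injective.injOn]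
  simp [smul_smul]

lemma integral_Ioi_inv_smul_comp_log (G : ℝ → E) :
    ∫ y in Ioi (0 : ℝ), y⁻¹ • G (Real.log y) = ∫ s, G s := by
  rw [← Real.range_exp, ← image_univ, integral_image_eq_integral_abs_deriv_smul .univ
    (fun x _ ↦ (Real.hasDerivAt_exp x).hasDerivWithinAt) Real.exp_injective.injOn]
  simp [smul_smul]

end LogSubstitution

section MellinPlancherel

open scoped FourierTransform

lemma cpw_eq_rpow_mul_exp (c t : ℝ) {y : ℝ} (hy : 0 < y) :
    cpw c t y =
      (y ^ (c - 1) : ℝ) * Complex.exp (↑(2 * Real.pi * (Real.log y * t)) * Complex.I) := by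
  have hy' : (y : ℂ) ≠ 0 := Complex.ofReal_ne_zero.2 hy.ne'
  rw [cpw, Complex.cpow_add _ _ hy', Complex.ofReal_cpow hy.le,
    Complex.cpow_def_of_ne_zero hy' (2 * _ * _ * _), ← Complex.ofReal_log hy.le]
  push_cast
  ring_nf

variable {E : Type*} [NormedAddCommGroup E]

lemma integral_cpw_smul [NormedSpace ℂ E] (c : ℝ) (f : ℝ → E) {y : ℝ} (hy : 0 < y) :
    ∫ t, cpw c t y • f t = ((y ^ (c - 1) : ℝ) : ℂ) • 𝓕⁻ f (Real.log y) := by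
  simp only [cpw_eq_rpow_mul_exp c _ hy, mul_smul, integral_smul, Real.fourierInv_eq']
  simp

lemma norm_sq_integral_cpw_smul_mul_rpow [NormedSpace ℂ E] (c : ℝ) (f : ℝ → E) {y : ℝ}
    (hy : 0 < y) :
    ‖∫ t, cpw c t y • f t‖ ^ 2 * y ^ (-(2 * c - 1)) = y⁻¹ * ‖𝓕⁻ f (Real.log y)‖ ^ 2 := by
  have hpow : (y ^ (c - 1)) ^ 2 * y ^ (-(2 * c - 1)) = y⁻¹ := by
    rw [← Real.rpow_mul_natCast hy.le, ← Real.rpow_add hy, ← Real.rpow_neg_one]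
    push_cast
    ring_nf
  rw [integral_cpw_smul c f hy, norm_smul, Complex.norm_real,
    Real.norm_of_nonneg (by positivity), mul_pow, mul_right_comm, hpow]

variable [InnerProductSpace ℂ E] [CompleteSpace E]

lemma integrableOn_norm_sq_integral_cpw_smul (c : ℝ) {f : ℝ → E} (hf₁ : Integrable f)
    (hf₂ : MemLp f 2) :
    IntegrableOn (fun y ↦ ‖∫ t, cpw c t y • f t‖ ^ 2 * y ^ (-(2 * c - 1))) (Ioi 0) :=
  (integrableOn_Ioi_inv_smul_comp_log_iff.2 (integrable_norm_sq_fourierInv hf₁ hf₂)).congr_fun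
    (fun _ hy ↦ (norm_sq_integral_cpw_smul_mul_rpow c f hy).symm) measurableSet_Ioi

lemma integral_norm_sq_integral_cpw_smul (c : ℝ) {f : ℝ → E} (hf₁ : Integrable f)
    (hf₂ : MemLp f 2) :
    ∫ y in Ioi (0 : ℝ), ‖∫ t, cpw c t y • f t‖ ^ 2 * y ^ (-(2 * c - 1)) = ∫ t, ‖f t‖ ^ 2 := by
  rw [setIntegral_congr_fun measurableSet_Ioi
    fun y hy ↦ norm_sq_integral_cpw_smul_mul_rpow c f hy]
  exact (integral_Ioi_inv_smul_comp_log fun s ↦ ‖𝓕⁻ f s‖ ^ 2).trans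
    (integral_norm_sq_fourierInv hf₁ hf₂)

end MellinPlancherel

section WeightedHolder

lemma mul_rpow_neg_mul_mul_rpow (a p q : ℝ) {y : ℝ} (hy : 0 < y) :
    p * y ^ (-a) * (q * y ^ a) = p * q := by
  rw [mul_mul_mul_comm, ← Real.rpow_add hy, neg_add_cancel, Real.rpow_zero, mul_one]

variable {a : ℝ} {g Φ : ℝ → ℝ}

lemma ae_abs_mul_rpow_le_wnormInfR (hg : wnormInf a g ≠ ⊤) :
    ∀ᵐ y ∂volume.restrict (Ioi 0), |g y| * y ^ a ≤ wnormInfR a g := by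
  have h : ∀ᵐ y ∂volume.restrict (Ioi 0), ENNReal.ofReal (|g y| * y ^ a) ≤ wnormInf a g :=
    ENNReal.ae_le_essSup _
  exact h.mono fun y hy ↦ (ENNReal.ofReal_le_iff_le_toReal hg).1 hy

lemma integrableOn_mul_abs_of_wnormInf_ne_top
    (hgm : AEStronglyMeasurable g (volume.restrict (Ioi 0))) (hg : wnormInf a g ≠ ⊤)
    (hΦ : IntegrableOn (fun y ↦ Φ y * y ^ (-a)) (Ioi 0)) :
    IntegrableOn (fun y ↦ Φ y * |g y|) (Ioi 0) := by
  have hbdd : ∀ᵐ y ∂volume.restrict (Ioi 0), ‖|g y| * y ^ a‖ ≤ wnormInfR a g := by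
    filter_upwards [ae_abs_mul_rpow_le_wnormInfR hg, ae_restrict_mem measurableSet_Ioi]
      with y hy (hy₀ : 0 < y)
    rwa [Real.norm_of_nonneg (by positivity)]
  have hmeas : AEStronglyMeasurable (fun y ↦ |g y| * y ^ a) (volume.restrict (Ioi 0)) :=
    hgm.norm.mul (by fun_prop)
  exact IntegrableOn.congr_fun (hΦ.mul_bdd hmeas hbdd)
    (fun _ hy ↦ mul_rpow_neg_mul_mul_rpow a _ _ hy) measurableSet_Ioi

lemma setIntegral_mul_abs_le_wnormInfR_mul (hg : wnormInf a g ≠ ⊤) (hΦ₀ : ∀ y, 0 ≤ Φ y)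
    (hΦ : IntegrableOn (fun y ↦ Φ y * y ^ (-a)) (Ioi 0)) :
    ∫ y in Ioi (0 : ℝ), Φ y * |g y| ≤
      wnormInfR a g * ∫ y in Ioi (0 : ℝ), Φ y * y ^ (-a) := by
  rw [← integral_const_mul]
  refine integral_mono_of_nonneg (.of_forall fun y ↦ mul_nonneg (hΦ₀ y) (abs_nonneg _))
    (hΦ.const_mul _) ?_
  filter_upwards [ae_abs_mul_rpow_le_wnormInfR hg, ae_restrict_mem measurableSet_Ioi]
    with y hy (hy₀ : 0 < y)
  have := hΦ₀ y
  calc Φ y * |g y| = Φ y * y ^ (-a) * (|g y| * y ^ a) :=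
        (mul_rpow_neg_mul_mul_rpow a _ _ hy₀).symm
    _ ≤ Φ y * y ^ (-a) * wnormInfR a g := by gcongr
    _ = wnormInfR a g * (Φ y * y ^ (-a)) := mul_comm _ _

end WeightedHolder

theorem moment_bound_oscillatory_mellin_general {E : Type*} [NormedAddCommGroup E]
    [InnerProductSpace ℂ E] [CompleteSpace E] (c : ℝ) {S : Set ℝ} (hS : MeasurableSet S)
    {g : ℝ → ℝ} (hgm : AEStronglyMeasurable g (volume.restrict (Ioi 0)))
    (hg : wnormInf (2 * c - 1) g ≠ ⊤) {h : ℝ → E} (h₁ : IntegrableOn h S)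
    (h₂ : MemLp h 2 (volume.restrict S)) :
    IntegrableOn (fun y ↦ ‖∫ t in S, cpw c t y • h t‖ ^ 2 * |g y|) (Ioi 0) ∧
      ∫ y in Ioi (0 : ℝ), ‖∫ t in S, cpw c t y • h t‖ ^ 2 * |g y| ≤
        wnormInfR (2 * c - 1) g * ∫ t in S, ‖h t‖ ^ 2 := by
  have hf₁ : Integrable (S.indicator h) := h₁.integrable_indicator hS
  have hf₂ : MemLp (S.indicator h) 2 := (memLp_indicator_iff_restrict hS).2 h₂
  have hinner (y : ℝ) : ∫ t in S, cpw c t y • h t = ∫ t, cpw c t y • S.indicator h t := by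
    simp only [← integral_indicator hS, indicator_smul]
  have hnorm : ∫ t in S, ‖h t‖ ^ 2 = ∫ t, ‖S.indicator h t‖ ^ 2 := by
    rw [← integral_indicator hS]
    exact integral_congr_ae (.of_forall fun t ↦ by by_cases ht : t ∈ S <;> simp [ht])
  have hΦ := integrableOn_norm_sq_integral_cpw_smul c hf₁ hf₂
  simp only [hinner]
  refine ⟨integrableOn_mul_abs_of_wnormInf_ne_top hgm hg hΦ, ?_⟩
  rw [hnorm, ← integral_norm_sq_integral_cpw_smul c hf₁ hf₂]
  exact setIntegral_mul_abs_le_wnormInfR_mul hg (fun _ ↦ by positivity) hΦ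

/-- Lemma A.4 (ii): moment bound for oscillatory Mellin integrals: for a
random variable `Y` with density `g` on `(0,∞)` satisfying `‖g‖_{L^∞(x^{2c-1})} < ∞` and
`1_{[-k,k]}h ∈ L²(ℝ)`,
`E[|∫_{-k}^k Y^{c-1+2πit} h(t) dt|²] ≤ ‖g‖_{L^∞(x^{2c-1})} ∫_{-k}^k |h(t)|² dt`. -/
theorem moment_bound_oscillatory_mellin
    (c k : ℝ) (hk : 0 < k) (g : ℝ → ℝ) (hg : IsDensity g)
    (hginf : wnormInf (2 * c - 1) g ≠ ⊤)
    (h : ℝ → ℂ)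
    (hmeas : AEStronglyMeasurable h (volume.restrict (Icc (-k) k)))
    (hL2 : IntegrableOn (fun t => ‖h t‖ ^ 2) (Icc (-k) k)) :
    (∫ y in Ioi (0 : ℝ), ‖∫ t in Icc (-k) k, cpw c t y * h t‖ ^ 2 * g y)
      ≤ wnormInfR (2 * c - 1) g * ∫ t in Icc (-k) k, ‖h t‖ ^ 2 := by
  have h₂ : MemLp h 2 (volume.restrict (Icc (-k) k)) :=
    (memLp_two_iff_integrable_sq_norm hmeas).2 hL2
  simpa only [smul_eq_mul, abs_of_nonneg (hg.1 _)] using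
    (moment_bound_oscillatory_mellin_general c measurableSet_Icc hg.2.2.1.aestronglyMeasurable
      hginf (h₂.integrable one_le_two) h₂).2

end MultErr
end
end

section
/- Unbiasedness and decomposition of the test statistic: In the multiplicative measurement error model, assume M_c[φ](t) ≠ 0 for all t and 1_{[−k,k]} w/M_c[φ] essentially bounded for all k > 0. Then for every k > 0 and n ≥ 2: (a) E[q̂_k²] = q_k²(f − f₀); and (b) q̂_k² = U_k + 2 W_k + q_k²(f − f₀), where U_k = (n(n−1))⁻¹ Σ_{j₁≠j₂} ∫_{−k}^{k} ṽ(Y_{j₁},t) ṽ(Y_{j₂},−t) |M_c[φ](t)|^{−2} w²(t) dt is a canonical U-statistic and W_k = n⁻¹ Σ_{j=1}^{n} ∫_{−k}^{k} ṽ(Y_j,t) (M_c[f_Y](t) − M_c[f₀Y](t))‾ |M_c[φ](t)|^{−2} w²(t) dt is a centred linear statistic, with ṽ(x,t) = x^{c−1+2πit} − E[Y^{c−1+2πit}]. -/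
open MeasureTheory Set Filter
open scoped ENNReal

noncomputable section

namespace MultErr

variable {Ω : Type*} [MeasurableSpace Ω]

variable {Ω' : Type*} [MeasurableSpace Ω']

/-!
Let `ν` be the measure `|M_c[φ](t)|⁻² w²(t) dt` on `[-k, k]` and `B(u, v) = ∫ u(t) v(-t) dν(t)`;
since `ν` is invariant under `t ↦ -t`, the form `B` is symmetric. Put `X_j(t) = Y_j^(c-1+2πit)`,
`m = M_c[f_Y]` and `m₀ = M_c[f₀Y]`. For real `g` one has `M_c[g](-t) = conj (M_c[g](t))`, and
`M_c[h * φ] = M_c[h] M_c[φ]`, so that `T̂_k` averages `B(X_j, X_l)` over `j ≠ l`, `Ŝ_k` averages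
`B(X_j, m₀)`, `q_k²(f₀) = B(m₀, m₀)` and `q_k²(f - f₀) = B(m - m₀, m - m₀)`. The decomposition is
then Hoeffding's: expand `B` bilinearly in `X_j = (X_j - m) + m`. By Fubini
`E[B(X_j - m, u)] = B(E[X_j] - m, u) = 0`, which gives both degeneracy and centring, hence
unbiasedness.
-/

section MellinConvolution

variable {f g : ℝ → ℂ} {s : ℂ}

lemma quasiMeasurePreserving_div_Ioi :
    Measure.QuasiMeasurePreserving (fun p : ℝ × ℝ => p.2 / p.1)
      ((volume.restrict (Ioi 0)).prod (volume.restrict (Ioi 0))) (volume.restrict (Ioi 0)) := by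
  refine QuasiMeasurePreserving.prod_of_right (by fun_prop) ?_
  filter_upwards [ae_restrict_mem measurableSet_Ioi] with x (hx : 0 < x)
  have hscale : Measure.QuasiMeasurePreserving (fun y : ℝ => y / x) volume volume := by
    simpa [div_eq_inv_mul] using
      Measure.quasiMeasurePreserving_smul (volume : Measure ℝ) (inv_ne_zero hx.ne')
  exact hscale.restrict fun y hy => div_pos hy hx

lemma integral_comp_div_Ioi {E : Type*} [NormedAddCommGroup E] [NormedSpace ℝ E] (g : ℝ → E)
    {x : ℝ} (hx : 0 < x) :
    ∫ y in Ioi (0 : ℝ), g (y / x) = x • ∫ y in Ioi (0 : ℝ), g y := by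
  simpa [div_eq_mul_inv] using integral_comp_mul_right_Ioi g 0 (inv_pos.mpr hx)

lemma integrable_mconvC_integrand (hf : IntegrableOn f (Ioi 0)) (hg : IntegrableOn g (Ioi 0)) :
    Integrable (fun p : ℝ × ℝ => f p.1 * g (p.2 / p.1) / (p.1 : ℂ))
      ((volume.restrict (Ioi 0)).prod (volume.restrict (Ioi 0))) := by
  have hmeas : AEStronglyMeasurable (fun p : ℝ × ℝ => f p.1 * g (p.2 / p.1) / (p.1 : ℂ))
      ((volume.restrict (Ioi 0)).prod (volume.restrict (Ioi 0))) := by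
    have hg' := hg.aestronglyMeasurable.comp_quasiMeasurePreserving quasiMeasurePreserving_div_Ioi
    have hinv : Measurable fun p : ℝ × ℝ => (p.1 : ℂ)⁻¹ := by fun_prop
    simp only [div_eq_mul_inv _ (Complex.ofReal _)]
    exact (hf.aestronglyMeasurable.comp_fst.mul hg').mul hinv.aestronglyMeasurable
  rw [integrable_prod_iff hmeas]
  constructor
  · filter_upwards [ae_restrict_mem measurableSet_Ioi] with x hx
    have hslice : IntegrableOn (fun y => g (y / x)) (Ioi 0) := by
      simpa [div_eq_mul_inv] using
        (integrableOn_Ioi_comp_mul_right_iff g 0 (inv_pos.mpr hx)).mpr (by simpa using hg)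
    exact (hslice.const_mul (f x)).div_const (x : ℂ)
  · refine (hf.norm.mul_const (∫ u in Ioi (0 : ℝ), ‖g u‖)).congr ?_
    filter_upwards [ae_restrict_mem measurableSet_Ioi] with x (hx : 0 < x)
    simp only [norm_mul, norm_div, Complex.norm_real, Real.norm_of_nonneg hx.le]
    rw [integral_div, integral_const_mul, integral_comp_div_Ioi (fun y => ‖g y‖) hx, smul_eq_mul]
    field_simp

lemma integrableOn_mconvC (hf : IntegrableOn f (Ioi 0)) (hg : IntegrableOn g (Ioi 0)) :
    IntegrableOn (mconvC f g) (Ioi 0) :=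
  (integrable_mconvC_integrand hf hg).integral_prod_right

lemma integral_mconvC (hf : IntegrableOn f (Ioi 0)) (hg : IntegrableOn g (Ioi 0)) :
    ∫ y in Ioi (0 : ℝ), mconvC f g y
      = (∫ x in Ioi (0 : ℝ), f x) * ∫ x in Ioi (0 : ℝ), g x := by
  calc ∫ y in Ioi (0 : ℝ), mconvC f g y
      = ∫ x in Ioi (0 : ℝ), ∫ y in Ioi (0 : ℝ), f x * g (y / x) / (x : ℂ) :=
        (integral_integral_swap (integrable_mconvC_integrand hf hg)).symm
    _ = ∫ x in Ioi (0 : ℝ), f x * ∫ y in Ioi (0 : ℝ), g y := by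
        refine setIntegral_congr_fun measurableSet_Ioi fun x (hx : 0 < x) => ?_
        have hx' : (x : ℂ) ≠ 0 := mod_cast hx.ne'
        rw [integral_div, integral_const_mul, integral_comp_div_Ioi g hx, Complex.real_smul]
        field_simp
    _ = _ := integral_mul_const _ _

lemma mconvC_cpow_mul (f g : ℝ → ℂ) (s : ℂ) {y : ℝ} (hy : 0 < y) :
    mconvC (fun x => (x : ℂ) ^ s * f x) (fun x => (x : ℂ) ^ s * g x) y
      = (y : ℂ) ^ s * mconvC f g y := by
  unfold mconvC
  rw [← integral_const_mul]
  refine setIntegral_congr_fun measurableSet_Ioi fun x (hx : 0 < x) => ?_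
  have hsplit : (y : ℂ) ^ s = (x : ℂ) ^ s * ((y / x : ℝ) : ℂ) ^ s := by
    rw [← Complex.mul_cpow_ofReal_nonneg hx.le (div_pos hy hx).le, ← Complex.ofReal_mul,
      mul_div_cancel₀ y hx.ne']
  simp only [hsplit]
  ring

lemma hasMellin_mconvC (hf : MellinConvergent f s) (hg : MellinConvergent g s) :
    HasMellin (mconvC f g) s (mellin f s * mellin g s) := by
  have hcongr : EqOn (mconvC (fun x => (x : ℂ) ^ (s - 1) * f x) fun x => (x : ℂ) ^ (s - 1) * g x)
      (fun y => (y : ℂ) ^ (s - 1) • mconvC f g y) (Ioi 0) :=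
    fun y hy => mconvC_cpow_mul f g (s - 1) hy
  exact ⟨(integrableOn_mconvC hf hg).congr_fun hcongr measurableSet_Ioi,
    (setIntegral_congr_fun measurableSet_Ioi hcongr).symm.trans (integral_mconvC hf hg)⟩

end MellinConvolution

section MellinLine

variable {f : ℝ → ℂ} {c : ℝ} {g : ℝ → ℝ}

lemma mellinConvergent_of_re_eq {s s' : ℂ} (hf : MellinConvergent f s) (hs : s'.re = s.re) :
    MellinConvergent f s' := by
  have hphase : AEStronglyMeasurable (fun x : ℝ => (x : ℂ) ^ (s' - s)) (volume.restrict (Ioi 0)) :=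
    Measurable.aestronglyMeasurable (by fun_prop)
  refine (Integrable.bdd_mul (c := 1) hf hphase ?_).congr ?_
  · filter_upwards [ae_restrict_mem measurableSet_Ioi] with x hx
    simp [Complex.norm_cpow_eq_rpow_re_of_pos hx, hs]
  · filter_upwards [ae_restrict_mem measurableSet_Ioi] with x (hx : 0 < x)
    have hx' : (x : ℂ) ≠ 0 := mod_cast hx.ne'
    rw [smul_eq_mul, smul_eq_mul, ← mul_assoc, ← Complex.cpow_add _ _ hx', sub_add_sub_cancel]

lemma mellinConvergent_line (hf : MellinConvergent f c) (t : ℝ) :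
    MellinConvergent f (c + t * Complex.I) :=
  mellinConvergent_of_re_eq hf (by simp)

lemma continuous_mellin_line (hf : MellinConvergent f c) :
    Continuous fun t : ℝ => mellin f (c + t * Complex.I) := by
  refine continuous_of_dominated (bound := fun x => ‖(x : ℂ) ^ ((c : ℂ) - 1) • f x‖)
    (fun t => (mellinConvergent_line hf t).aestronglyMeasurable) (fun t => ?_) hf.norm ?_
  · filter_upwards [ae_restrict_mem measurableSet_Ioi] with x (hx : 0 < x)
    simp [Complex.norm_cpow_eq_rpow_re_of_pos hx]
  · filter_upwards [ae_restrict_mem measurableSet_Ioi] with x (hx : 0 < x)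
    have hx' : (x : ℂ) ≠ 0 := mod_cast hx.ne'
    exact (Continuous.const_cpow (by fun_prop) (.inl hx')).smul continuous_const

lemma cpw_eq (c t x : ℝ) :
    cpw c t x = (x : ℂ) ^ ((c : ℂ) + ((2 * Real.pi * t : ℝ) : ℂ) * Complex.I - 1) := by
  rw [cpw]
  push_cast
  ring_nf

lemma mellinT_eq_mellin (c : ℝ) (g : ℝ → ℝ) (t : ℝ) :
    mellinT c g t
      = mellin (fun x => (g x : ℂ)) (c + ((2 * Real.pi * t : ℝ) : ℂ) * Complex.I) := by
  simp only [mellinT, mellin, cpw_eq, smul_eq_mul]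

lemma mellinConvergent_of_memW1 (hm : AEStronglyMeasurable g (volume.restrict (Ioi 0)))
    (hg : MemW1 (c - 1) g) : MellinConvergent (fun x => (g x : ℂ)) c := by
  refine (mellin_convergent_iff_norm subset_rfl measurableSet_Ioi
    (Complex.continuous_ofReal.comp_aestronglyMeasurable hm)).mpr ?_
  simpa [MemW1, mul_comm] using hg

lemma integrableOn_cpw_mul (hg : MellinConvergent (fun x => (g x : ℂ)) c) (t : ℝ) :
    IntegrableOn (fun x => cpw c t x * (g x : ℂ)) (Ioi 0) := by
  simpa only [cpw_eq, MellinConvergent, smul_eq_mul] using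
    mellinConvergent_line hg (2 * Real.pi * t)

lemma continuous_mellinT (hg : MellinConvergent (fun x => (g x : ℂ)) c) :
    Continuous (mellinT c g) := by
  simp only [funext (mellinT_eq_mellin c g)]
  exact (continuous_mellin_line hg).comp (by fun_prop : Continuous fun t : ℝ => 2 * Real.pi * t)

lemma mellinT_sub {g₀ : ℝ → ℝ} (hg : MellinConvergent (fun x => (g x : ℂ)) c)
    (hg₀ : MellinConvergent (fun x => (g₀ x : ℂ)) c) (t : ℝ) :
    mellinT c (fun x => g x - g₀ x) t = mellinT c g t - mellinT c g₀ t := by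
  simpa only [mellinT_eq_mellin, Complex.ofReal_sub] using
    (hasMellin_sub (mellinConvergent_line hg _) (mellinConvergent_line hg₀ _)).2

lemma ofReal_mconv (f g : ℝ → ℝ) (y : ℝ) :
    (mconv f g y : ℂ) = mconvC (fun x => (f x : ℂ)) (fun x => (g x : ℂ)) y := by
  rw [mconv, mconvC, ← integral_complex_ofReal]
  push_cast
  rfl

lemma mellinConvergent_mconv {h : ℝ → ℝ} (hg : MellinConvergent (fun x => (g x : ℂ)) c)
    (hh : MellinConvergent (fun x => (h x : ℂ)) c) :
    MellinConvergent (fun x => (mconv g h x : ℂ)) c := by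
  simpa only [ofReal_mconv] using (hasMellin_mconvC hg hh).1

lemma mellinT_mconv {h : ℝ → ℝ} (hg : MellinConvergent (fun x => (g x : ℂ)) c)
    (hh : MellinConvergent (fun x => (h x : ℂ)) c) (t : ℝ) :
    mellinT c (mconv g h) t = mellinT c g t * mellinT c h t := by
  simpa only [mellinT_eq_mellin, ofReal_mconv] using
    (hasMellin_mconvC (mellinConvergent_line hg _) (mellinConvergent_line hh _)).2

lemma cpw_neg (c t : ℝ) {x : ℝ} (hx : 0 < x) :
    cpw c (-t) x = starRingEnd ℂ (cpw c t x) := by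
  have harg : (x : ℂ).arg ≠ Real.pi := by
    rw [Complex.arg_ofReal_of_nonneg hx.le]
    exact Real.pi_pos.ne
  have hconj := Complex.cpow_conj (x : ℂ) (c - 1 + 2 * Real.pi * Complex.I * t) harg
  rw [Complex.conj_ofReal] at hconj
  rw [cpw, cpw, ← hconj]
  simp [Complex.conj_ofNat]

lemma mellinT_neg (c : ℝ) (g : ℝ → ℝ) (t : ℝ) :
    mellinT c g (-t) = starRingEnd ℂ (mellinT c g t) := by
  rw [mellinT, mellinT, ← integral_conj]
  refine setIntegral_congr_fun measurableSet_Ioi fun x hx => ?_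
  simp [cpw_neg c t hx]

end MellinLine

section Hoeffding

variable {𝕜 : Type*} [Field 𝕜] {n : ℕ}

/-- The average of `a` over the index set of the sample. -/
def sampleMean (a : Fin n → 𝕜) : 𝕜 := (n : 𝕜)⁻¹ * ∑ j, a j

/-- The average of `A` over the `n (n - 1)` ordered pairs of distinct indices: a U-statistic of
order two is the off-diagonal mean of its kernel evaluated at the sample. -/
def offDiagMean (A : Fin n → Fin n → 𝕜) : 𝕜 :=
  ((n : 𝕜) * ((n : 𝕜) - 1))⁻¹ * ∑ j, ∑ l, if j ≠ l then A j l else 0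

lemma sampleMean_sub (a b : Fin n → 𝕜) :
    sampleMean (fun j => a j - b j) = sampleMean a - sampleMean b := by
  simp only [sampleMean, Finset.sum_sub_distrib, mul_sub]

lemma offDiagMean_sub (A B : Fin n → Fin n → 𝕜) :
    offDiagMean (fun j l => A j l - B j l) = offDiagMean A - offDiagMean B := by
  have hterm (j l : Fin n) : (if j ≠ l then A j l - B j l else 0)
      = (if j ≠ l then A j l else 0) - if j ≠ l then B j l else 0 := by
    split_ifs <;> simp
  simp only [offDiagMean, hterm, Finset.sum_sub_distrib, mul_sub]

lemma offDiagMean_swap (A : Fin n → Fin n → 𝕜) :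
    offDiagMean (fun j l => A l j) = offDiagMean A := by
  rw [offDiagMean, offDiagMean, Finset.sum_comm]
  simp only [ne_comm]

variable [CharZero 𝕜]

lemma sampleMean_const (hn : n ≠ 0) (z : 𝕜) : sampleMean (fun _ : Fin n => z) = z := by
  have hn' : (n : 𝕜) ≠ 0 := mod_cast hn
  simp [sampleMean, hn']

lemma offDiagMean_left (hn : 2 ≤ n) (a : Fin n → 𝕜) :
    offDiagMean (fun j _ => a j) = sampleMean a := by
  have hn' : (n : 𝕜) - 1 ≠ 0 := sub_ne_zero.mpr (by exact_mod_cast (by lia : n ≠ 1))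
  have hrow (j : Fin n) : (∑ l, if j ≠ l then a j else 0) = ((n : 𝕜) - 1) * a j := by
    rw [← Finset.sum_filter, Finset.filter_ne, Finset.sum_const,
      Finset.card_erase_of_mem (Finset.mem_univ j), Finset.card_fin, nsmul_eq_mul,
      Nat.cast_pred (by lia)]
  rw [offDiagMean, sampleMean, Finset.sum_congr rfl fun j _ => hrow j, ← Finset.mul_sum,
    mul_inv, mul_assoc, inv_mul_cancel_left₀ hn']

lemma offDiagMean_right (hn : 2 ≤ n) (a : Fin n → 𝕜) :
    offDiagMean (fun _ l => a l) = sampleMean a :=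
  (offDiagMean_swap _).trans (offDiagMean_left hn a)

theorem hoeffding_decomposition {V : Type*} [AddCommGroup V] [Module 𝕜 V]
    {B : LinearMap.BilinForm 𝕜 V} (hB : B.IsSymm) (hn : 2 ≤ n) (ξ : Fin n → V) (m m₀ : V) :
    offDiagMean (fun j l => B (ξ j) (ξ l)) - 2 * sampleMean (fun j => B (ξ j) m₀) + B m₀ m₀
      = offDiagMean (fun j l => B (ξ j - m) (ξ l - m))
        + 2 * sampleMean (fun j => B (ξ j - m) (m - m₀)) + B (m - m₀) (m - m₀) := by
  have hn₀ : n ≠ 0 := by lia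
  have hsymm (j : Fin n) : B m (ξ j) = B (ξ j) m := (hB.eq _ _).symm
  simp only [map_sub, LinearMap.sub_apply, offDiagMean_sub, sampleMean_sub, offDiagMean_left hn,
    offDiagMean_right hn, sampleMean_const hn₀, hsymm, (hB.eq m m₀).symm]
  ring

end Hoeffding

section ReflectionPairing

variable {ν : Measure ℝ}

/-- The pairing `∫ u(t) v(-t) dν(t)`. On Mellin transforms of real functions it is the sesquilinear
pairing, since there `v(-t)` is the conjugate of `v(t)`, but it is bilinear. -/
def reflPairing (ν : Measure ℝ) (u v : ℝ → ℂ) : ℂ := ∫ t, u t * v (-t) ∂ν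

lemma reflPairing_symm [ν.IsNegInvariant] (u v : ℝ → ℂ) :
    reflPairing ν u v = reflPairing ν v u := by
  rw [reflPairing, reflPairing, ← integral_neg_eq_self]
  simp only [neg_neg, mul_comm]

lemma memLp_comp_neg [ν.IsNegInvariant] {u : ℝ → ℂ} {p : ℝ≥0∞} (hu : MemLp u p ν) :
    MemLp (fun t => u (-t)) p ν :=
  hu.comp_measurePreserving (Measure.measurePreserving_neg ν)

lemma integrable_mul_comp_neg [IsFiniteMeasure ν] [ν.IsNegInvariant] {u v : ℝ → ℂ}
    (hu : MemLp u ∞ ν) (hv : MemLp v ∞ ν) : Integrable (fun t => u t * v (-t)) ν :=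
  ((memLp_comp_neg hv).mul (r := ∞) hu).integrable le_top

/-- The `ν`-essentially bounded functions, as honest functions rather than classes modulo `ν`. -/
def boundedFunctions (ν : Measure ℝ) : Submodule ℂ (ℝ → ℂ) where
  carrier := {u | MemLp u ∞ ν}
  add_mem' := MemLp.add
  zero_mem' := MemLp.zero
  smul_mem' z _ hu := hu.const_smul z

/-- `reflPairing` as a bilinear form on the `ν`-essentially bounded functions. -/
def reflForm (ν : Measure ℝ) [IsFiniteMeasure ν] [ν.IsNegInvariant] :
    LinearMap.BilinForm ℂ (boundedFunctions ν) :=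
  LinearMap.mk₂ ℂ (fun u v => reflPairing ν u v)
    (fun u u' v => by
      simpa [reflPairing, add_mul] using
        integral_add (integrable_mul_comp_neg u.2 v.2) (integrable_mul_comp_neg u'.2 v.2))
    (fun z u v => by simp [reflPairing, mul_assoc, integral_const_mul])
    (fun u v v' => by
      simpa [reflPairing, mul_add] using
        integral_add (integrable_mul_comp_neg u.2 v.2) (integrable_mul_comp_neg u.2 v'.2))
    (fun z u v => by simp [reflPairing, mul_left_comm, integral_const_mul])

lemma reflForm_isSymm [IsFiniteMeasure ν] [ν.IsNegInvariant] : (reflForm ν).IsSymm :=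
  ⟨fun u v => reflPairing_symm (u : ℝ → ℂ) v⟩

theorem reflPairing_decomposition [IsFiniteMeasure ν] [ν.IsNegInvariant] {n : ℕ} (hn : 2 ≤ n)
    {ξ : Fin n → ℝ → ℂ} {m m₀ : ℝ → ℂ} (hξ : ∀ j, MemLp (ξ j) ∞ ν) (hm : MemLp m ∞ ν)
    (hm₀ : MemLp m₀ ∞ ν) :
    offDiagMean (fun j l => reflPairing ν (ξ j) (ξ l))
        - 2 * sampleMean (fun j => reflPairing ν (ξ j) m₀) + reflPairing ν m₀ m₀
      = offDiagMean (fun j l => reflPairing ν (ξ j - m) (ξ l - m))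
        + 2 * sampleMean (fun j => reflPairing ν (ξ j - m) (m - m₀))
        + reflPairing ν (m - m₀) (m - m₀) :=
  hoeffding_decomposition (reflForm_isSymm (ν := ν)) hn (fun j => ⟨ξ j, hξ j⟩) ⟨m, hm⟩ ⟨m₀, hm₀⟩

end ReflectionPairing

section WithDensity

variable {α : Type*} [MeasurableSpace α] {μ : Measure α} {ρ : α → ℝ}

lemma integral_withDensity_ofReal (hρ : AEMeasurable ρ μ) (hρ₀ : ∀ x, 0 ≤ ρ x) (F : α → ℂ) :
    ∫ x, F x ∂μ.withDensity (fun x => ENNReal.ofReal (ρ x)) = ∫ x, F x * (ρ x : ℂ) ∂μ := by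
  rw [integral_withDensity_eq_integral_toReal_smul₀ hρ.ennreal_ofReal (by simp)]
  simp only [ENNReal.toReal_ofReal (hρ₀ _), Complex.real_smul, mul_comm]

lemma integrable_withDensity_ofReal_iff (hρ : AEMeasurable ρ μ) (hρ₀ : ∀ x, 0 ≤ ρ x) {F : α → ℂ} :
    Integrable F (μ.withDensity fun x => ENNReal.ofReal (ρ x))
      ↔ Integrable (fun x => F x * (ρ x : ℂ)) μ := by
  rw [integrable_withDensity_iff_integrable_smul₀' hρ.ennreal_ofReal (by simp)]
  simp only [ENNReal.toReal_ofReal (hρ₀ _), Complex.real_smul, mul_comm]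

end WithDensity

section FrequencyMeasure

variable {c k : ℝ} {w φ : ℝ → ℝ}

/-- The measure `|M_c[φ](t)|⁻² w²(t) dt` on `[-k, k]`, against which the frequency variable is
integrated throughout. -/
def freqMeasure (c k : ℝ) (w φ : ℝ → ℝ) : Measure ℝ :=
  (volume.restrict (Icc (-k) k)).withDensity fun t => ENNReal.ofReal (wgt c w φ t)

lemma wgt_nonneg (c : ℝ) (w φ : ℝ → ℝ) (t : ℝ) : 0 ≤ wgt c w φ t := by
  unfold wgt
  positivity

lemma measurable_wgt (hw : Measurable w) (hφ : MellinConvergent (fun x => (φ x : ℂ)) c) :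
    Measurable (wgt c w φ) :=
  (hw.pow_const 2).div ((continuous_mellinT hφ).measurable.norm.pow_const 2)

lemma wgt_neg (hw : ∀ t, w (-t) = w t) (t : ℝ) : wgt c w φ (-t) = wgt c w φ t := by
  simp only [wgt, hw, mellinT_neg, RCLike.norm_conj]

lemma ae_freqMeasure_mem_Icc : ∀ᵐ t ∂freqMeasure c k w φ, t ∈ Icc (-k) k :=
  (withDensity_absolutelyContinuous _ _).ae_le (ae_restrict_mem measurableSet_Icc)

lemma integral_freqMeasure (hρ : Measurable (wgt c w φ)) (F : ℝ → ℂ) :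
    ∫ t, F t ∂freqMeasure c k w φ = ∫ t in Icc (-k) k, F t * (wgt c w φ t : ℂ) :=
  integral_withDensity_ofReal hρ.aemeasurable (wgt_nonneg c w φ) F

lemma isFiniteMeasure_freqMeasure (hw : ∀ t, 0 ≤ w t) (hwinf : winf c k w φ ≠ ⊤) :
    IsFiniteMeasure (freqMeasure c k w φ) := by
  refine isFiniteMeasure_withDensity_ofReal
    (.of_bounded (C := (winf c k w φ).toReal ^ 2) ?_)
  have hess : ∀ᵐ t, ENNReal.ofReal ((Icc (-k) k).indicator (fun t => w t / ‖mellinT c φ t‖) t)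
      ≤ winf c k w φ := ENNReal.ae_le_essSup _
  filter_upwards [ae_restrict_mem measurableSet_Icc, ae_restrict_of_ae hess] with t ht hle
  rw [indicator_of_mem ht, ENNReal.ofReal_le_iff_le_toReal hwinf] at hle
  rw [Real.norm_of_nonneg (wgt_nonneg c w φ t), wgt, ← div_pow]
  exact pow_le_pow_left₀ (div_nonneg (hw t) (norm_nonneg _)) hle 2

lemma isNegInvariant_freqMeasure (hw : ∀ t, w (-t) = w t) :
    (freqMeasure c k w φ).IsNegInvariant := by
  have hneg : MeasurePreserving Neg.neg (volume.restrict (Icc (-k) k))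
      (volume.restrict (Icc (-k) k)) := by
    simpa using (Measure.measurePreserving_neg (volume : Measure ℝ)).restrict_preimage
      (measurableSet_Icc (a := -k) (b := k))
  refine ⟨Measure.ext fun s hs => ?_⟩
  rw [Measure.neg, Measure.map_apply measurable_neg hs, freqMeasure,
    withDensity_apply _ (measurable_neg hs), withDensity_apply _ hs]
  simpa only [wgt_neg hw] using
    hneg.setLIntegral_comp_preimage_emb (MeasurableEquiv.neg ℝ).measurableEmbedding
      (fun t => ENNReal.ofReal (wgt c w φ t)) s

lemma memLp_top_freqMeasure {u : ℝ → ℂ} (hu : Measurable u) {C : ℝ}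
    (hC : ∀ t ∈ Icc (-k) k, ‖u t‖ ≤ C) : MemLp u ∞ (freqMeasure c k w φ) :=
  memLp_top_of_bound hu.aestronglyMeasurable C (ae_freqMeasure_mem_Icc.mono hC)

lemma memLp_top_freqMeasure_of_continuous {u : ℝ → ℂ} (hu : Continuous u) :
    MemLp u ∞ (freqMeasure c k w φ) :=
  let ⟨_, hC⟩ := isCompact_Icc.exists_bound_of_continuousOn hu.continuousOn
  memLp_top_freqMeasure hu.measurable hC

lemma measurable_cpw (c : ℝ) : Measurable fun p : ℝ × ℝ => cpw c p.1 p.2 := by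
  unfold cpw
  fun_prop

lemma norm_cpw_le {t : ℝ} (ht : t ∈ Icc (-k) k) (x : ℝ) :
    ‖cpw c t x‖ ≤ |x| ^ (c - 1) * Real.exp (Real.pi * (2 * Real.pi * k)) := by
  -- The exponential factor accounts for `x < 0`, where `arg x = π`.
  have hre : ((c : ℂ) - 1 + 2 * Real.pi * Complex.I * t).re = c - 1 := by simp
  have him : ((c : ℂ) - 1 + 2 * Real.pi * Complex.I * t).im = 2 * Real.pi * t := by simp
  have hphase : -((x : ℂ).arg * (2 * Real.pi * t)) ≤ Real.pi * (2 * Real.pi * k) := by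
    refine (neg_le_abs _).trans ?_
    rw [abs_mul, abs_mul, abs_of_pos Real.two_pi_pos]
    gcongr
    exacts [Complex.abs_arg_le_pi _, abs_le.mpr ht]
  refine (Complex.norm_cpow_le _ _).trans ?_
  rw [hre, him, Complex.norm_real, Real.norm_eq_abs, div_eq_mul_inv, ← Real.exp_neg]
  gcongr

lemma memLp_top_cpw (x : ℝ) : MemLp (fun t => cpw c t x) ∞ (freqMeasure c k w φ) :=
  memLp_top_freqMeasure ((measurable_cpw c).comp measurable_prodMk_right)
    fun _ ht => norm_cpw_le ht x

end FrequencyMeasure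

section Pairings

variable {c k : ℝ} {w φ : ℝ → ℝ} {Ω : Type*} {n : ℕ} {Y : Fin n → Ω → ℝ}

lemma That_eq_offDiagMean (hρ : Measurable (wgt c w φ)) (ω : Ω) :
    That c k w φ Y ω = offDiagMean fun j l => reflPairing (freqMeasure c k w φ)
      (fun t => cpw c t (Y j ω)) (fun t => cpw c t (Y l ω)) := by
  simp only [That, offDiagMean, reflPairing, integral_freqMeasure hρ]

lemma Shat_eq_sampleMean (hρ : Measurable (wgt c w φ)) (f₀ : ℝ → ℝ) (ω : Ω) :
    Shat c k w φ f₀ Y ω = sampleMean fun j => reflPairing (freqMeasure c k w φ)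
      (fun t => cpw c t (Y j ω)) (mellinT c (mconv f₀ φ)) := by
  simp only [Shat, sampleMean, reflPairing, integral_freqMeasure hρ, mellinT_neg]

lemma hkfull_eq_reflPairing (hρ : Measurable (wgt c w φ)) (g : ℝ → ℝ) (x y : ℝ) :
    hkfull c k w φ g x y = reflPairing (freqMeasure c k w φ) (vtil c g x) (vtil c g y) := by
  simp only [hkfull, reflPairing, integral_freqMeasure hρ]

lemma Ustat_hkfull_eq_offDiagMean (hρ : Measurable (wgt c w φ)) (g : ℝ → ℝ) (ω : Ω) :
    Ustat (hkfull c k w φ g) Y ω = offDiagMean fun j l =>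
      reflPairing (freqMeasure c k w φ) (vtil c g (Y j ω)) (vtil c g (Y l ω)) := by
  simp only [Ustat, offDiagMean, hkfull_eq_reflPairing hρ]

lemma Wstat_eq_sampleMean (hρ : Measurable (wgt c w φ)) (g g₀ : ℝ → ℝ) (ω : Ω) :
    Wstat c k w φ g g₀ Y ω = sampleMean fun j => reflPairing (freqMeasure c k w φ)
      (vtil c g (Y j ω)) (mellinT c g - mellinT c g₀) := by
  simp only [Wstat, sampleMean, reflPairing, integral_freqMeasure hρ, Pi.sub_apply, mellinT_neg,
    map_sub]

lemma ofReal_qk2_eq_reflPairing (hρ : Measurable (wgt c w φ))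
    (hMφ : ∀ t ∈ Icc (-k) k, mellinT c φ t ≠ 0) (h : ℝ → ℝ) :
    (qk2 c k w h : ℂ) = reflPairing (freqMeasure c k w φ)
      (mellinT c h * mellinT c φ) (mellinT c h * mellinT c φ) := by
  rw [qk2, reflPairing, integral_freqMeasure hρ, ← integral_complex_ofReal]
  refine setIntegral_congr_fun measurableSet_Icc fun t ht => ?_
  have hφt : (‖mellinT c φ t‖ : ℂ) ≠ 0 := mod_cast norm_ne_zero_iff.mpr (hMφ t ht)
  simp only [Pi.mul_apply, mellinT_neg, ← map_mul, Complex.mul_conj', norm_mul, wgt]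
  push_cast
  field_simp

theorem qhat_eq_decomposition (hw : Measurable w) (hw₀ : ∀ t, 0 ≤ w t) (hw_even : ∀ t, w (-t) = w t)
    (hwinf : winf c k w φ ≠ ⊤) (hMφ : ∀ t ∈ Icc (-k) k, mellinT c φ t ≠ 0) {f f₀ : ℝ → ℝ}
    (hφ : MellinConvergent (fun x => (φ x : ℂ)) c) (hf : MellinConvergent (fun x => (f x : ℂ)) c)
    (hf₀ : MellinConvergent (fun x => (f₀ x : ℂ)) c) (hn : 2 ≤ n) (ω : Ω) :
    qhat c k w φ f₀ Y ω
      = (Ustat (hkfull c k w φ (mconv f φ)) Y ω).re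
        + 2 * (Wstat c k w φ (mconv f φ) (mconv f₀ φ) Y ω).re
        + qk2 c k w (fun x => f x - f₀ x) := by
  have := isFiniteMeasure_freqMeasure hw₀ hwinf
  have := isNegInvariant_freqMeasure (c := c) (k := k) (φ := φ) hw_even
  have hρ := measurable_wgt hw hφ
  have hm₀ : mellinT c (mconv f₀ φ) = mellinT c f₀ * mellinT c φ := funext (mellinT_mconv hf₀ hφ)
  have hm_sub : mellinT c (mconv f φ) - mellinT c (mconv f₀ φ)
      = mellinT c (fun x => f x - f₀ x) * mellinT c φ := by
    ext t
    simp only [Pi.sub_apply, Pi.mul_apply, mellinT_mconv hf hφ, mellinT_mconv hf₀ hφ,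
      mellinT_sub hf hf₀, sub_mul]
  have hbdd {h : ℝ → ℝ} (hh : MellinConvergent (fun x => (h x : ℂ)) c) :
      MemLp (mellinT c (mconv h φ)) ∞ (freqMeasure c k w φ) :=
    memLp_top_freqMeasure_of_continuous (continuous_mellinT (mellinConvergent_mconv hh hφ))
  have hdecomp : That c k w φ Y ω - 2 * Shat c k w φ f₀ Y ω + (qk2 c k w f₀ : ℂ)
      = Ustat (hkfull c k w φ (mconv f φ)) Y ω
        + 2 * Wstat c k w φ (mconv f φ) (mconv f₀ φ) Y ω
        + (qk2 c k w (fun x => f x - f₀ x) : ℂ) := by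
    rw [That_eq_offDiagMean hρ, Shat_eq_sampleMean hρ, Ustat_hkfull_eq_offDiagMean hρ,
      Wstat_eq_sampleMean hρ, ofReal_qk2_eq_reflPairing hρ hMφ, ofReal_qk2_eq_reflPairing hρ hMφ,
      ← hm₀, ← hm_sub]
    exact reflPairing_decomposition hn (fun j => memLp_top_cpw (Y j ω)) (hbdd hf) (hbdd hf₀)
  simpa [qhat] using congrArg Complex.re hdecomp

end Pairings

section Fubini

variable {α : Type*} [MeasurableSpace α] {μ : Measure α} {ν : Measure ℝ}
  [IsFiniteMeasure ν] [ν.IsNegInvariant] {v : α → ℝ → ℂ} {b : α → ℝ} {u : ℝ → ℂ}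

lemma integrable_uncurry_mul_comp_neg (hv : Measurable (Function.uncurry v))
    (hb : Integrable b μ) (hvb : ∀ᵐ t ∂ν, ∀ x, ‖v x t‖ ≤ b x) (hu : MemLp u ∞ ν) :
    Integrable (fun p : α × ℝ => v p.1 p.2 * u (-p.2)) (μ.prod ν) := by
  have hu' : Integrable (fun t => u (-t)) ν := (memLp_comp_neg hu).integrable le_top
  refine (hb.mul_prod hu'.norm).mono'
    (hv.aestronglyMeasurable.mul hu'.aestronglyMeasurable.comp_snd) ?_
  filter_upwards [Measure.quasiMeasurePreserving_snd.ae hvb] with p hp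
  rw [norm_mul]
  gcongr
  exact hp p.1

lemma integrable_reflPairing [SFinite μ] (hv : Measurable (Function.uncurry v))
    (hb : Integrable b μ) (hvb : ∀ᵐ t ∂ν, ∀ x, ‖v x t‖ ≤ b x) (hu : MemLp u ∞ ν) :
    Integrable (fun x => reflPairing ν (v x) u) μ :=
  (integrable_uncurry_mul_comp_neg hv hb hvb hu).integral_prod_left

lemma integral_reflPairing [SFinite μ] (hv : Measurable (Function.uncurry v))
    (hb : Integrable b μ) (hvb : ∀ᵐ t ∂ν, ∀ x, ‖v x t‖ ≤ b x) (hu : MemLp u ∞ ν) :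
    ∫ x, reflPairing ν (v x) u ∂μ = reflPairing ν (fun t => ∫ x, v x t ∂μ) u := by
  simp only [reflPairing, ← integral_mul_const]
  exact integral_integral_swap (integrable_uncurry_mul_comp_neg hv hb hvb hu)

lemma integrable_reflPairing_prod (hv : Measurable (Function.uncurry v))
    (hb : Integrable b μ) (hvb : ∀ᵐ t ∂ν, ∀ x, ‖v x t‖ ≤ b x) :
    Integrable (fun p : α × α => reflPairing ν (v p.1) (v p.2)) (μ.prod μ) := by
  have hmeas : Measurable fun q : (α × α) × ℝ => v q.1.1 q.2 * v q.1.2 (-q.2) :=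
    (hv.comp (by fun_prop : Measurable fun q : (α × α) × ℝ => (q.1.1, q.2))).mul
      (hv.comp (by fun_prop : Measurable fun q : (α × α) × ℝ => (q.1.2, -q.2)))
  have hvb' := (Measure.measurePreserving_neg ν).quasiMeasurePreserving.ae hvb
  refine Integrable.integral_prod_left (ν := ν) (f := fun q : (α × α) × ℝ => _)
    (((hb.mul_prod hb).comp_fst ν).mono' hmeas.aestronglyMeasurable ?_)
  filter_upwards [Measure.quasiMeasurePreserving_snd.ae hvb,
    Measure.quasiMeasurePreserving_snd.ae hvb'] with q hq hq'
  rw [norm_mul]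
  exact mul_le_mul (hq _) (hq' _) (norm_nonneg _) ((norm_nonneg _).trans (hq _))

end Fubini

section Sampling

open ProbabilityTheory

variable {Ω : Type*} [MeasurableSpace Ω] {P : Measure Ω} {n : ℕ}

lemma integral_sampleMean {a : Fin n → Ω → ℂ} (ha : ∀ j, Integrable (a j) P) :
    ∫ ω, sampleMean (fun j => a j ω) ∂P = sampleMean fun j => ∫ ω, a j ω ∂P := by
  simp only [sampleMean, integral_const_mul, integral_finsetSum _ fun j _ => ha j]

lemma integrable_sampleMean {a : Fin n → Ω → ℂ} (ha : ∀ j, Integrable (a j) P) :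
    Integrable (fun ω => sampleMean fun j => a j ω) P :=
  (integrable_finsetSum _ fun j _ => ha j).const_mul _

variable {A : Fin n → Fin n → Ω → ℂ}

lemma integrable_ite_ne (hA : ∀ j l, j ≠ l → Integrable (A j l) P) (j l : Fin n) :
    Integrable (fun ω => if j ≠ l then A j l ω else 0) P := by
  by_cases hjl : j = l
  · simp [hjl]
  · simpa [hjl] using hA j l hjl

lemma integrable_offDiagMean (hA : ∀ j l, j ≠ l → Integrable (A j l) P) :
    Integrable (fun ω => offDiagMean fun j l => A j l ω) P :=
  (integrable_finsetSum _ fun j _ => integrable_finsetSum _ fun l _ =>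
    integrable_ite_ne hA j l).const_mul _

lemma integral_offDiagMean (hA : ∀ j l, j ≠ l → Integrable (A j l) P) :
    ∫ ω, offDiagMean (fun j l => A j l ω) ∂P = offDiagMean fun j l => ∫ ω, A j l ω ∂P := by
  have hterm (j l : Fin n) :
      ∫ ω, (if j ≠ l then A j l ω else 0) ∂P = if j ≠ l then ∫ ω, A j l ω ∂P else 0 := by
    split_ifs <;> simp
  simp only [offDiagMean, integral_const_mul, ← hterm]
  rw [integral_finsetSum _ fun j _ => integrable_finsetSum _ fun l _ => integrable_ite_ne hA j l]
  simp only [integral_finsetSum _ fun l _ => integrable_ite_ne hA _ l]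

variable {μ : Measure ℝ} {Y : Fin n → Ω → ℝ}

lemma integrable_comp_of_hasLaw {𝓧 E : Type*} [MeasurableSpace 𝓧] [NormedAddCommGroup E]
    {X : Ω → 𝓧} {μ : Measure 𝓧} (hX : HasLaw X μ P) {F : 𝓧 → E} (hF : Integrable F μ) :
    Integrable (fun ω => F (X ω)) P :=
  (hX.map_eq.symm ▸ hF).comp_aemeasurable hX.aemeasurable

lemma hasLaw_pair [IsFiniteMeasure P] (hlaw : ∀ j, HasLaw (Y j) μ P) (hindep : iIndepFun Y P)
    {j l : Fin n} (hjl : j ≠ l) : HasLaw (fun ω => (Y j ω, Y l ω)) (μ.prod μ) P :=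
  (hindep.indepFun hjl).hasLaw_prod (hlaw j) (hlaw l)

variable {h : ℝ → ℝ → ℂ}

lemma integrable_Ustat [IsFiniteMeasure P] (hlaw : ∀ j, HasLaw (Y j) μ P) (hindep : iIndepFun Y P)
    (hh : Integrable (fun p : ℝ × ℝ => h p.1 p.2) (μ.prod μ)) : Integrable (Ustat h Y) P :=
  integrable_offDiagMean fun _ _ hjl => integrable_comp_of_hasLaw (hasLaw_pair hlaw hindep hjl) hh

lemma integral_Ustat [IsFiniteMeasure P] (hn : 2 ≤ n) (hlaw : ∀ j, HasLaw (Y j) μ P)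
    (hindep : iIndepFun Y P) (hh : Integrable (fun p : ℝ × ℝ => h p.1 p.2) (μ.prod μ)) :
    ∫ ω, Ustat h Y ω ∂P = ∫ p, h p.1 p.2 ∂(μ.prod μ) := by
  have hpair {j l : Fin n} (hjl : j ≠ l) :
      ∫ ω, h (Y j ω) (Y l ω) ∂P = ∫ p, h p.1 p.2 ∂(μ.prod μ) :=
    (hasLaw_pair hlaw hindep hjl).integral_comp hh.aestronglyMeasurable
  calc ∫ ω, Ustat h Y ω ∂P
      = offDiagMean fun j l => ∫ ω, h (Y j ω) (Y l ω) ∂P :=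
        integral_offDiagMean fun _ _ hjl =>
          integrable_comp_of_hasLaw (hasLaw_pair hlaw hindep hjl) hh
    _ = offDiagMean fun _ _ : Fin n => ∫ p, h p.1 p.2 ∂(μ.prod μ) := by
        simp only [offDiagMean]
        congr! 5 with j _ l _ hjl
        exact hpair hjl
    _ = ∫ p, h p.1 p.2 ∂(μ.prod μ) := by
        rw [offDiagMean_left hn, sampleMean_const (by lia)]

end Sampling

section MellinMoments

/-- The measure `μ` has finite moments `∫ x^(c-1+2πit) dμ(x)`, and they are the values of the
Mellin transform of `g`: the properties of the law with density `g` on `(0,∞)` from which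
`vtil c g` is centred. -/
structure HasMellinMoments (c : ℝ) (g : ℝ → ℝ) (μ : Measure ℝ) : Prop where
  integrable_rpow : Integrable (fun x => |x| ^ (c - 1)) μ
  integral_cpw : ∀ t, ∫ x, cpw c t x ∂μ = mellinT c g t

namespace HasMellinMoments

variable {c k : ℝ} {g : ℝ → ℝ} {μ : Measure ℝ}

lemma integrable_cpw (hμ : HasMellinMoments c g μ) (t : ℝ) : Integrable (cpw c t) μ :=
  (hμ.integrable_rpow.mul_const _).mono'
    ((measurable_cpw c).comp measurable_prodMk_left).aestronglyMeasurable
    (.of_forall (norm_cpw_le (abs_le.mp le_rfl)))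

variable [IsProbabilityMeasure μ]

lemma integral_vtil (hμ : HasMellinMoments c g μ) (t : ℝ) : ∫ x, vtil c g x t ∂μ = 0 := by
  simp only [vtil]
  rw [integral_sub (hμ.integrable_cpw t) (integrable_const _), hμ.integral_cpw]
  simp

lemma measurable_vtil (hμ : HasMellinMoments c g μ) :
    Measurable (Function.uncurry (vtil c g)) := by
  have hmean : Measurable fun t => ∫ x, cpw c t x ∂μ :=
    (measurable_cpw c).stronglyMeasurable.integral_prod_right.measurable
  rw [funext hμ.integral_cpw] at hmean
  exact ((measurable_cpw c).comp measurable_swap).sub (hmean.comp measurable_snd)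

lemma exists_integrable_bound_vtil (hμ : HasMellinMoments c g μ) (k : ℝ) :
    ∃ b : ℝ → ℝ, Integrable b μ ∧ ∀ t ∈ Icc (-k) k, ∀ x, ‖vtil c g x t‖ ≤ b x := by
  have henv := hμ.integrable_rpow.mul_const (Real.exp (Real.pi * (2 * Real.pi * k)))
  set b := fun x : ℝ => |x| ^ (c - 1) * Real.exp (Real.pi * (2 * Real.pi * k))
  refine ⟨fun x => b x + ∫ y, b y ∂μ, henv.add (integrable_const _), fun t ht x => ?_⟩
  refine (norm_sub_le _ _).trans (add_le_add (norm_cpw_le ht x) ?_)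
  rw [← hμ.integral_cpw]
  exact norm_integral_le_of_norm_le henv (.of_forall (norm_cpw_le ht))

variable {w φ : ℝ → ℝ} {u : ℝ → ℂ}

lemma memLp_top_vtil (hμ : HasMellinMoments c g μ) (x : ℝ) :
    MemLp (vtil c g x) ∞ (freqMeasure c k w φ) :=
  let ⟨_, _, hb⟩ := hμ.exists_integrable_bound_vtil k
  memLp_top_freqMeasure (hμ.measurable_vtil.comp measurable_prodMk_left) fun t ht => hb t ht x

variable [IsFiniteMeasure (freqMeasure c k w φ)] [(freqMeasure c k w φ).IsNegInvariant]

lemma integrable_reflPairing_vtil (hμ : HasMellinMoments c g μ)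
    (hu : MemLp u ∞ (freqMeasure c k w φ)) :
    Integrable (fun x => reflPairing (freqMeasure c k w φ) (vtil c g x) u) μ :=
  let ⟨_, hb, hvb⟩ := hμ.exists_integrable_bound_vtil k
  integrable_reflPairing hμ.measurable_vtil hb (ae_freqMeasure_mem_Icc.mono hvb) hu

lemma integral_reflPairing_vtil (hμ : HasMellinMoments c g μ)
    (hu : MemLp u ∞ (freqMeasure c k w φ)) :
    ∫ x, reflPairing (freqMeasure c k w φ) (vtil c g x) u ∂μ = 0 := by
  obtain ⟨b, hb, hvb⟩ := hμ.exists_integrable_bound_vtil k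
  rw [integral_reflPairing hμ.measurable_vtil hb (ae_freqMeasure_mem_Icc.mono hvb) hu]
  simp [reflPairing, hμ.integral_vtil]

lemma integral_hkfull_left (hμ : HasMellinMoments c g μ) (hρ : Measurable (wgt c w φ)) (y : ℝ) :
    ∫ x, hkfull c k w φ g x y ∂μ = 0 := by
  simpa only [hkfull_eq_reflPairing hρ] using hμ.integral_reflPairing_vtil (hμ.memLp_top_vtil y)

lemma integral_hkfull_right (hμ : HasMellinMoments c g μ) (hρ : Measurable (wgt c w φ)) (x : ℝ) :
    ∫ y, hkfull c k w φ g x y ∂μ = 0 := by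
  simpa only [hkfull_eq_reflPairing hρ, reflPairing_symm (vtil c g x)] using
    hμ.integral_reflPairing_vtil (hμ.memLp_top_vtil x)

lemma integrable_hkfull_prod (hμ : HasMellinMoments c g μ) (hρ : Measurable (wgt c w φ)) :
    Integrable (fun p : ℝ × ℝ => hkfull c k w φ g p.1 p.2) (μ.prod μ) := by
  obtain ⟨b, hb, hvb⟩ := hμ.exists_integrable_bound_vtil k
  simpa only [hkfull_eq_reflPairing hρ] using
    integrable_reflPairing_prod hμ.measurable_vtil hb (ae_freqMeasure_mem_Icc.mono hvb)

lemma integral_hkfull_prod (hμ : HasMellinMoments c g μ) (hρ : Measurable (wgt c w φ)) :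
    ∫ p : ℝ × ℝ, hkfull c k w φ g p.1 p.2 ∂μ.prod μ = 0 := by
  rw [integral_prod _ (hμ.integrable_hkfull_prod hρ)]
  simp only [hμ.integral_hkfull_right hρ, integral_zero]

open ProbabilityTheory

variable {Ω : Type*} [MeasurableSpace Ω] {P : Measure Ω} {n : ℕ} {Y : Fin n → Ω → ℝ} {g₀ : ℝ → ℝ}

lemma integrable_Wstat (hμ : HasMellinMoments c g μ) (hρ : Measurable (wgt c w φ))
    (hu : MemLp (mellinT c g - mellinT c g₀) ∞ (freqMeasure c k w φ))
    (hlaw : ∀ j, HasLaw (Y j) μ P) : Integrable (Wstat c k w φ g g₀ Y) P := by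
  simpa only [funext (Wstat_eq_sampleMean hρ g g₀)] using integrable_sampleMean fun j =>
    integrable_comp_of_hasLaw (hlaw j) (hμ.integrable_reflPairing_vtil hu)

lemma integral_Wstat (hμ : HasMellinMoments c g μ) (hρ : Measurable (wgt c w φ))
    (hu : MemLp (mellinT c g - mellinT c g₀) ∞ (freqMeasure c k w φ))
    (hlaw : ∀ j, HasLaw (Y j) μ P) : ∫ ω, Wstat c k w φ g g₀ Y ω ∂P = 0 := by
  have hint := hμ.integrable_reflPairing_vtil hu
  have hzero (j : Fin n) : ∫ ω, reflPairing (freqMeasure c k w φ) (vtil c g (Y j ω))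
      (mellinT c g - mellinT c g₀) ∂P = 0 :=
    ((hlaw j).integral_comp hint.aestronglyMeasurable).trans (hμ.integral_reflPairing_vtil hu)
  simp only [Wstat_eq_sampleMean hρ]
  rw [integral_sampleMean fun j => integrable_comp_of_hasLaw (hlaw j) hint]
  simp [hzero, sampleMean]

lemma integral_re_Wstat (hμ : HasMellinMoments c g μ) (hρ : Measurable (wgt c w φ))
    (hu : MemLp (mellinT c g - mellinT c g₀) ∞ (freqMeasure c k w φ))
    (hlaw : ∀ j, HasLaw (Y j) μ P) : ∫ ω, (Wstat c k w φ g g₀ Y ω).re ∂P = 0 := by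
  simpa [hμ.integral_Wstat hρ hu hlaw] using integral_re (hμ.integrable_Wstat hρ hu hlaw)

lemma integral_re_Ustat_add_Wstat_add_const [IsProbabilityMeasure P] (hμ : HasMellinMoments c g μ)
    (hρ : Measurable (wgt c w φ))
    (hu : MemLp (mellinT c g - mellinT c g₀) ∞ (freqMeasure c k w φ)) (hn : 2 ≤ n)
    (hlaw : ∀ j, HasLaw (Y j) μ P) (hindep : iIndepFun Y P) (q : ℝ) :
    ∫ ω, ((Ustat (hkfull c k w φ g) Y ω).re + 2 * (Wstat c k w φ g g₀ Y ω).re + q) ∂P = q := by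
  have hh := hμ.integrable_hkfull_prod (k := k) hρ
  have hU_int : Integrable (fun ω => (Ustat (hkfull c k w φ g) Y ω).re) P :=
    (integrable_Ustat hlaw hindep hh).re
  have hW_int : Integrable (fun ω => 2 * (Wstat c k w φ g g₀ Y ω).re) P :=
    (hμ.integrable_Wstat hρ hu hlaw).re.const_mul 2
  have hU : ∫ ω, (Ustat (hkfull c k w φ g) Y ω).re ∂P = 0 := by
    simpa [integral_Ustat hn hlaw hindep hh, hμ.integral_hkfull_prod hρ] using
      integral_re (integrable_Ustat hlaw hindep hh)
  have hW : ∫ ω, 2 * (Wstat c k w φ g g₀ Y ω).re ∂P = 0 := by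
    rw [integral_const_mul, hμ.integral_re_Wstat hρ hu hlaw, mul_zero]
  have hUW_int : Integrable (fun ω => (Ustat (hkfull c k w φ g) Y ω).re
      + 2 * (Wstat c k w φ g g₀ Y ω).re) P := hU_int.add hW_int
  rw [integral_add hUW_int (integrable_const q), integral_add hU_int hW_int, hU, hW]
  simp

end HasMellinMoments

end MellinMoments

section DensityLaw

variable {c : ℝ} {g : ℝ → ℝ}

/-- The measure on `(0,∞)` with Lebesgue density `g`. -/
def densityLaw (g : ℝ → ℝ) : Measure ℝ :=
  (volume.restrict (Ioi 0)).withDensity fun x => ENNReal.ofReal (g x)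

lemma IID.hasLaw {Ω : Type*} [MeasurableSpace Ω] {P : Measure Ω} {n : ℕ} {Y : Fin n → Ω → ℝ}
    (hY : IID P Y g) (hg : ∀ y ≤ 0, g y = 0) (j : Fin n) :
    ProbabilityTheory.HasLaw (Y j) (densityLaw g) P where
  aemeasurable := (hY.2 j).1.aemeasurable
  map_eq := by
    rw [(hY.2 j).2, densityLaw, ← withDensity_indicator measurableSet_Ioi, indicator_eq_self.mpr]
    intro y hy
    contrapose! hy
    simp [hg y (not_lt.mp hy)]

lemma aemeasurable_of_mellinConvergent (hg : MellinConvergent (fun x => (g x : ℂ)) c) :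
    AEMeasurable g (volume.restrict (Ioi 0)) := by
  have hpow : Measurable fun x : ℝ => (x : ℂ) ^ (1 - (c : ℂ)) := by fun_prop
  refine (Complex.measurable_re.comp_aemeasurable
    (hpow.aemeasurable.mul hg.aestronglyMeasurable.aemeasurable)).congr ?_
  filter_upwards [ae_restrict_mem measurableSet_Ioi] with x (hx : 0 < x)
  have hx' : (x : ℂ) ≠ 0 := mod_cast hx.ne'
  have hcancel : (x : ℂ) ^ (1 - (c : ℂ)) * (x : ℂ) ^ ((c : ℂ) - 1) = 1 := by
    rw [← Complex.cpow_add _ _ hx', sub_add_sub_cancel, sub_self, Complex.cpow_zero]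
  simp [← mul_assoc, hcancel]

lemma integral_densityLaw (hg : AEMeasurable g (volume.restrict (Ioi 0))) (hg₀ : ∀ x, 0 ≤ g x)
    (F : ℝ → ℂ) : ∫ x, F x ∂densityLaw g = ∫ x in Ioi (0 : ℝ), F x * (g x : ℂ) :=
  integral_withDensity_ofReal hg hg₀ F

lemma hasMellinMoments_densityLaw (hg : MellinConvergent (fun x => (g x : ℂ)) c)
    (hg₀ : ∀ x, 0 ≤ g x) : HasMellinMoments c g (densityLaw g) where
  integrable_rpow := by
    have hcpw : Integrable (cpw c 0) (densityLaw g) :=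
      (integrable_withDensity_ofReal_iff (aemeasurable_of_mellinConvergent hg) hg₀).mpr
        (integrableOn_cpw_mul hg 0)
    have hpos : ∀ᵐ x ∂densityLaw g, 0 < x :=
      (withDensity_absolutelyContinuous _ _).ae_le (ae_restrict_mem measurableSet_Ioi)
    refine hcpw.norm.congr (hpos.mono fun x hx => ?_)
    simp [cpw, Complex.norm_cpow_eq_rpow_re_of_pos hx, abs_of_pos hx]
  integral_cpw t := integral_densityLaw (aemeasurable_of_mellinConvergent hg) hg₀ (cpw c t)

lemma mconv_nonneg {f φ : ℝ → ℝ} (hf : ∀ x, 0 ≤ f x) (hφ : ∀ x, 0 ≤ φ x) (y : ℝ) :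
    0 ≤ mconv f φ y :=
  setIntegral_nonneg measurableSet_Ioi fun x hx =>
    div_nonneg (mul_nonneg (hf x) (hφ _)) (le_of_lt hx)

lemma mconv_eq_zero_of_nonpos (f : ℝ → ℝ) {φ : ℝ → ℝ} (hφ : ∀ x ≤ 0, φ x = 0) {y : ℝ}
    (hy : y ≤ 0) : mconv f φ y = 0 :=
  setIntegral_eq_zero_of_forall_eq_zero fun x hx => by
    simp [hφ _ (div_nonpos_of_nonpos_of_nonneg hy (le_of_lt hx))]

end DensityLaw

theorem test_statistic_unbiased_and_decomposition_general
    {Ω : Type*} [MeasurableSpace Ω] (P : Measure Ω) [IsProbabilityMeasure P]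
    (c k : ℝ) (w φ f f₀ : ℝ → ℝ)
    (hw : Measurable w) (hw₀ : ∀ t, 0 ≤ w t) (hw_even : ∀ t, w (-t) = w t)
    (hφ : IsDensity φ) (hφ_memW1 : MemW1 (c - 1) φ) (hf : IsDensity f) (hf_memW1 : MemW1 (c - 1) f)
    (hf₀ : MellinConvergent (fun x => (f₀ x : ℂ)) c)
    (hMφ : ∀ t ∈ Icc (-k) k, mellinT c φ t ≠ 0) (hwinf : winf c k w φ ≠ ⊤)
    (n : ℕ) (hn : 2 ≤ n) (Y : Fin n → Ω → ℝ) (hY : IID P Y (mconv f φ)) :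
    (∫ ω, qhat c k w φ f₀ Y ω ∂P) = qk2 c k w (fun x => f x - f₀ x) ∧
    (∀ ω : Ω, qhat c k w φ f₀ Y ω
        = (Ustat (hkfull c k w φ (mconv f φ)) Y ω).re
          + 2 * (Wstat c k w φ (mconv f φ) (mconv f₀ φ) Y ω).re
          + qk2 c k w (fun x => f x - f₀ x)) ∧
    (∀ y : ℝ,
      (∫ x in Ioi (0 : ℝ), hkfull c k w φ (mconv f φ) x y * ((mconv f φ) x : ℂ)) = 0 ∧
      (∫ x in Ioi (0 : ℝ), hkfull c k w φ (mconv f φ) y x * ((mconv f φ) x : ℂ)) = 0) ∧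
    (∫ ω, (Wstat c k w φ (mconv f φ) (mconv f₀ φ) Y ω).re ∂P) = 0 := by
  have hφM := mellinConvergent_of_memW1 hφ.2.2.1.aestronglyMeasurable hφ_memW1
  have hfM := mellinConvergent_of_memW1 hf.2.2.1.aestronglyMeasurable hf_memW1
  have hgM := mellinConvergent_mconv hfM hφM
  have hρ := measurable_wgt hw hφM
  have hg₀ := mconv_nonneg hf.1 hφ.1
  have hlaw := hY.hasLaw fun y hy => mconv_eq_zero_of_nonpos f hφ.2.1 hy
  have hμ := hasMellinMoments_densityLaw hgM hg₀
  have hint := integral_densityLaw (aemeasurable_of_mellinConvergent hgM) hg₀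
  have : IsProbabilityMeasure (densityLaw (mconv f φ)) :=
    (hlaw ⟨0, by lia⟩).isProbabilityMeasure_iff.mp inferInstance
  have := isFiniteMeasure_freqMeasure hw₀ hwinf
  have := isNegInvariant_freqMeasure (c := c) (k := k) (φ := φ) hw_even
  have hdiff : MemLp (mellinT c (mconv f φ) - mellinT c (mconv f₀ φ)) ∞ (freqMeasure c k w φ) :=
    memLp_top_freqMeasure_of_continuous
      ((continuous_mellinT hgM).sub (continuous_mellinT (mellinConvergent_mconv hf₀ hφM)))
  have hdecomp := qhat_eq_decomposition (Y := Y) hw hw₀ hw_even hwinf hMφ hφM hfM hf₀ hn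
  refine ⟨?_, hdecomp, fun y => ⟨?_, ?_⟩, hμ.integral_re_Wstat hρ hdiff hlaw⟩
  · simpa only [hdecomp] using
      hμ.integral_re_Ustat_add_Wstat_add_const hρ hdiff hn hlaw hY.1 _
  · rw [← hint, hμ.integral_hkfull_left hρ]
  · rw [← hint, hμ.integral_hkfull_right hρ]

/-- decomposition (15): unbiasedness and decomposition of the test
statistic: `E[q̂_k²] = q_k²(f-f₀)` and `q̂_k² = U_k + 2W_k + q_k²(f-f₀)`, where `U_k` is a
canonical (degenerate) U-statistic and `W_k` is a centred linear statistic. -/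
theorem test_statistic_unbiased_and_decomposition
    {Ω : Type*} [MeasurableSpace Ω] (P : Measure Ω) [IsProbabilityMeasure P]
    (c : ℝ) (w φ f f₀ : ℝ → ℝ)
    (hw : IsSymmDensity w) (hφ : regD c φ) (hf : regD c f) (hf₀ : regD c f₀)
    (hMφ : ∀ t, mellinT c φ t ≠ 0)
    (hwinf : ∀ k : ℝ, 0 < k → winf c k w φ ≠ ⊤)
    (k : ℝ) (hk : 0 < k) (n : ℕ) (hn : 2 ≤ n)
    (Y : Fin n → Ω → ℝ) (hY : IID P Y (mconv f φ)) :
    -- (a) unbiasedness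
    (∫ ω, qhat c k w φ f₀ Y ω ∂P) = qk2 c k w (fun x => f x - f₀ x) ∧
    -- (b) decomposition q̂_k² = U_k + 2W_k + q_k²(f-f₀)
    (∀ ω : Ω, qhat c k w φ f₀ Y ω
        = (Ustat (hkfull c k w φ (mconv f φ)) Y ω).re
          + 2 * (Wstat c k w φ (mconv f φ) (mconv f₀ φ) Y ω).re
          + qk2 c k w (fun x => f x - f₀ x)) ∧
    -- U_k is canonical: E[h_k(Y, y)] = 0 for every y
    (∀ y : ℝ,
      (∫ x in Ioi (0 : ℝ), hkfull c k w φ (mconv f φ) x y * ((mconv f φ) x : ℂ)) = 0 ∧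
      (∫ x in Ioi (0 : ℝ), hkfull c k w φ (mconv f φ) y x * ((mconv f φ) x : ℂ)) = 0) ∧
    -- W_k is centred
    (∫ ω, (Wstat c k w φ (mconv f φ) (mconv f₀ φ) Y ω).re ∂P) = 0 :=
  test_statistic_unbiased_and_decomposition_general P c k w φ f f₀ hw.1 hw.2.1 hw.2.2.1
    hφ.1 hφ.2.1 hf.1 hf.2.1 (mellinConvergent_of_memW1 hf₀.1.2.2.1.aestronglyMeasurable hf₀.2.1)
    (fun t _ => hMφ t) (hwinf k hk) n hn Y hY

end MultErr
end
end
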